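/- Let f : ℝ^d → ℝ be twice continuously differentiable with L_H-Lipschitz continuous Hessian (L_H > 0). Let x ∈ ℝ^d, S ∈ ℝ^{l×d}, ŝ ∈ ℝ^l with s := Sᵀŝ ≠ 0, let θ ∈ (0,1), and let 0 < α ≤ 2(1−θ)/L_H. If f(x) − q̂(ŝ) ≥ (1/(3α))·‖s‖³, then f(x) − f(x + s) ≥ θ·( f(x) − q̂(ŝ) ). -/

import Mathlib

open scoped BigOperators NNReal
open MeasureTheory ProbabilityTheory

namespace RARC

noncomputable def enorm {n : ℕ} (v : Fin n → ℝ) : ℝ := Real.sqrt (∑ i, v i ^ 2)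

noncomputable def opNorm {m n : ℕ} (S : Matrix (Fin m) (Fin n) ℝ) : ℝ :=
  sSup {c : ℝ | ∃ v : Fin n → ℝ, enorm v = 1 ∧ c = enorm (S.mulVec v)}

noncomputable def grad {n : ℕ} (f : (Fin n → ℝ) → ℝ) (x : Fin n → ℝ) : Fin n → ℝ :=
  fun i => fderiv ℝ f x (Pi.single i 1)

noncomputable def hess {n : ℕ} (f : (Fin n → ℝ) → ℝ) (x : Fin n → ℝ) :
    Matrix (Fin n) (Fin n) ℝ :=
  Matrix.of fun i j =>
    fderiv ℝ (fun y => fderiv ℝ f y (Pi.single j 1)) x (Pi.single i 1)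

noncomputable def qhat {d l : ℕ} (f : (Fin d → ℝ) → ℝ) (x : Fin d → ℝ)
    (S : Matrix (Fin l) (Fin d) ℝ) (s : Fin l → ℝ) : ℝ :=
  f x + (∑ i, S.mulVec (grad f x) i * s i)
    + (1/2) * (∑ i, s i * (S * hess f x * S.transpose).mulVec s i)

noncomputable def mhat {d l : ℕ} (f : (Fin d → ℝ) → ℝ) (x : Fin d → ℝ)
    (S : Matrix (Fin l) (Fin d) ℝ) (α : ℝ) (s : Fin l → ℝ) : ℝ :=
  qhat f x S s + (1/(3*α)) * enorm (S.transpose.mulVec s) ^ 3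

noncomputable def lambdaMin {n : ℕ} (A : Matrix (Fin n) (Fin n) ℝ) : ℝ :=
  sInf {t : ℝ | ∃ v : Fin n → ℝ, enorm v = 1 ∧ t = ∑ i, v i * A.mulVec v i}

def LipschitzHessian {n : ℕ} (f : (Fin n → ℝ) → ℝ) (L : ℝ) : Prop :=
  ∀ x y : Fin n → ℝ, opNorm (hess f y - hess f x) ≤ L * enorm (y - x)

noncomputable def augM {d : ℕ} (f : (Fin d → ℝ) → ℝ) (x : Fin d → ℝ) :
    Matrix (Fin d) (Fin (d+1)) ℝ :=
  Matrix.of fun i j => Fin.cases (grad f x i) (fun j' => hess f x i j') j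

noncomputable def gaussVec (l : ℕ) : Measure (Fin l → ℝ) :=
  Measure.pi fun _ => gaussianReal 0 (l : ℝ≥0)⁻¹

noncomputable def scaledGaussian (l d : ℕ) : Measure (Fin l → Fin d → ℝ) :=
  Measure.pi fun _ : Fin l => Measure.pi fun _ : Fin d => gaussianReal 0 (l : ℝ≥0)⁻¹


theorem enorm_nonneg' {n : ℕ} (v : Fin n → ℝ) : 0 ≤ enorm v := Real.sqrt_nonneg _

theorem enorm_sq {n : ℕ} (v : Fin n → ℝ) : enorm v ^ 2 = ∑ i, v i ^ 2 :=
  Real.sq_sqrt (Finset.sum_nonneg fun i _ => sq_nonneg _)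

theorem enorm_smul' {n : ℕ} (c : ℝ) (hc : 0 ≤ c) (v : Fin n → ℝ) :
    enorm (c • v) = c * enorm v := by
  unfold enorm
  simp only [Pi.smul_apply, smul_eq_mul, mul_pow, ← Finset.mul_sum]
  rw [Real.sqrt_mul (sq_nonneg c), Real.sqrt_sq hc]

theorem le_opNorm {n : ℕ} (A : Matrix (Fin n) (Fin n) ℝ) (v : Fin n → ℝ) (hv : enorm v = 1) :
    enorm (A.mulVec v) ≤ opNorm A := by
  apply le_csSup
  · refine ⟨Real.sqrt (∑ i, ∑ j, A i j ^ 2), ?_⟩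
    rintro c ⟨w, hw, rfl⟩
    apply Real.sqrt_le_sqrt
    apply Finset.sum_le_sum
    intro i _
    have h := Finset.sum_mul_sq_le_sq_mul_sq Finset.univ (fun j => A i j) w
    rw [← enorm_sq w, hw] at h
    simpa [Matrix.mulVec, dotProduct] using h
  · exact ⟨v, hv, rfl⟩

theorem dot_le {n : ℕ} (v w : Fin n → ℝ) : ∑ i, v i * w i ≤ enorm v * enorm w := by
  have h := Finset.sum_mul_sq_le_sq_mul_sq Finset.univ v w
  rw [← enorm_sq, ← enorm_sq, ← mul_pow] at h
  exact (abs_le_of_sq_le_sq' h (mul_nonneg (enorm_nonneg' _) (enorm_nonneg' _))).2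

theorem quad_le {n : ℕ} (A : Matrix (Fin n) (Fin n) ℝ) (v : Fin n → ℝ) (hv : v ≠ 0) :
    ∑ i, v i * A.mulVec v i ≤ opNorm A * enorm v ^ 2 := by
  have hpos : 0 < enorm v := by
    rcases (enorm_nonneg' v).lt_or_eq with h | h
    · exact h
    · exfalso
      apply hv
      have h2 := enorm_sq v
      rw [← h] at h2
      have h3 := (Finset.sum_eq_zero_iff_of_nonneg (fun i _ => sq_nonneg (v i))).1
        (h2.symm.trans (by norm_num))
      ext i
      simpa using h3 i (Finset.mem_univ i)
  have h1 : enorm ((enorm v)⁻¹ • v) = 1 := by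
    rw [enorm_smul' _ (inv_nonneg.2 hpos.le), inv_mul_cancel₀ hpos.ne']
  have h2 := le_opNorm A _ h1
  rw [Matrix.mulVec_smul, enorm_smul' _ (inv_nonneg.2 hpos.le), inv_mul_le_iff₀ hpos] at h2
  have h3 := dot_le v (A.mulVec v)
  nlinarith [mul_le_mul_of_nonneg_left h2 hpos.le]

theorem clm_sum {n : ℕ} (T : (Fin n → ℝ) →L[ℝ] ℝ) (v : Fin n → ℝ) :
    T v = ∑ i, v i * T (Pi.single i 1) := by
  conv_lhs => rw [pi_eq_sum_univ' v]
  rw [map_sum]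
  refine Finset.sum_congr rfl fun i _ => ?_
  rw [map_smul, smul_eq_mul]

theorem line_deriv {n : ℕ} (x s : Fin n → ℝ) (t : ℝ) :
    HasDerivAt (fun t : ℝ => x + t • s) s t := by
  simpa using ((hasDerivAt_id t).smul_const s).const_add x

theorem taylor {d : ℕ} (L : ℝ) (f : (Fin d → ℝ) → ℝ) (hf : ContDiff ℝ 2 f)
    (hLip : LipschitzHessian f L) (x s : Fin d → ℝ) (hs : s ≠ 0) :
    f (x + s) ≤ f x + ∑ i, s i * grad f x i + (1/2) * (∑ i, s i * (hess f x).mulVec s i)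
      + L / 6 * enorm s ^ 3 := by
  have hd1 : ∀ t : ℝ, HasDerivAt (fun t : ℝ => f (x + t • s))
      (∑ i, s i * grad f (x + t • s) i) t := by
    intro t
    have h := ((hf.differentiable (by norm_num)) (x + t • s)).hasFDerivAt.comp_hasDerivAt t
      (line_deriv x s t)
    rw [clm_sum] at h
    exact h
  have hd2 : ∀ t : ℝ, HasDerivAt (fun t : ℝ => ∑ i, s i * grad f (x + t • s) i)
      (∑ i, s i * (hess f (x + t • s)).mulVec s i) t := by
    intro t
    have hg : ∀ j : Fin d, HasDerivAt (fun t : ℝ => grad f (x + t • s) j)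
        (∑ i, s i * hess f (x + t • s) i j) t := by
      intro j
      have hc : ContDiff ℝ 1 (fun y => fderiv ℝ f y (Pi.single j 1)) :=
        (hf.fderiv_right (m := 1) (by norm_num)).clm_apply contDiff_const
      have h := ((hc.differentiable (by norm_num)) (x + t • s)).hasFDerivAt.comp_hasDerivAt t
        (line_deriv x s t)
      rw [clm_sum] at h
      exact h
    have h := HasDerivAt.fun_sum (u := Finset.univ) fun j _ => (hg j).const_mul (s j)
    refine h.congr_deriv ?_
    simp only [Matrix.mulVec, dotProduct, Finset.mul_sum]
    rw [Finset.sum_comm]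
    refine Finset.sum_congr rfl fun i _ => Finset.sum_congr rfl fun j _ => ?_
    ring
  set q : ℝ := ∑ i, s i * (hess f x).mulVec s i with hq
  set g : ℝ := ∑ i, s i * grad f x i with hg
  have hb : ∀ t : ℝ, 0 ≤ t →
      ∑ i, s i * (hess f (x + t • s)).mulVec s i - q ≤ L * t * enorm s ^ 3 := by
    intro t ht
    have h1 := quad_le (hess f (x + t • s) - hess f x) s hs
    have h2 := hLip x (x + t • s)
    rw [add_sub_cancel_left, enorm_smul' _ ht] at h2
    have h3 := mul_le_mul_of_nonneg_right h2 (sq_nonneg (enorm s))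
    simp only [Matrix.sub_mulVec, Pi.sub_apply, mul_sub, Finset.sum_sub_distrib] at h1
    calc _ ≤ _ := h1
      _ ≤ _ := h3
      _ = _ := by ring
  set N := enorm s ^ 3
  have e1 : ∀ t : ℝ, HasDerivAt (fun t : ℝ => ∑ i, s i * grad f (x + t • s) i - g - t * q
      - L * N * t ^ 2 / 2) (∑ i, s i * (hess f (x + t • s)).mulVec s i - q - L * N * t) t := by
    intro t
    have h := (((hd2 t).sub_const g).sub ((hasDerivAt_id t).mul_const q)).sub
      (((hasDerivAt_pow 2 t).const_mul (L * N)).div_const 2)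
    refine h.congr_deriv ?_
    push_cast
    ring
  have e0 : ∀ t : ℝ, HasDerivAt (fun t : ℝ => f (x + t • s) - t * g - t ^ 2 / 2 * q
      - L * N * t ^ 3 / 6) (∑ i, s i * grad f (x + t • s) i - g - t * q
      - L * N * t ^ 2 / 2) t := by
    intro t
    have h := (((hd1 t).sub ((hasDerivAt_id t).mul_const g)).sub
      (((hasDerivAt_pow 2 t).div_const 2).mul_const q)).sub
      (((hasDerivAt_pow 3 t).const_mul (L * N)).div_const 6)
    refine h.congr_deriv ?_
    push_cast
    ring
  have a1 := antitoneOn_of_deriv_nonpos (convex_Ici (0:ℝ))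
    (fun t _ => (e1 t).continuousAt.continuousWithinAt)
    (fun t _ => (e1 t).differentiableAt.differentiableWithinAt)
    (fun t ht => by
      rw [(e1 t).deriv]
      have h0 : 0 ≤ t := interior_subset ht
      linarith [hb t h0])
  have a0 := antitoneOn_of_deriv_nonpos (convex_Ici (0:ℝ))
    (fun t _ => (e0 t).continuousAt.continuousWithinAt)
    (fun t _ => (e0 t).differentiableAt.differentiableWithinAt)
    (fun t ht => by
      rw [(e0 t).deriv]
      have h0 : 0 ≤ t := interior_subset ht
      have h := a1 (Set.mem_Ici.2 le_rfl) (Set.mem_Ici.2 h0) h0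
      simp only [zero_smul, add_zero] at h
      rw [← hg] at h
      linarith)
  have h := a0 (Set.mem_Ici.2 le_rfl) (Set.mem_Ici.2 zero_le_one) zero_le_one
  simp only [zero_smul, add_zero, one_smul] at h
  linarith

theorem qhat_eq {d l : ℕ} (f : (Fin d → ℝ) → ℝ) (x : Fin d → ℝ)
    (S : Matrix (Fin l) (Fin d) ℝ) (sh : Fin l → ℝ) :
    qhat f x S sh = f x + ∑ i, S.transpose.mulVec sh i * grad f x i
      + (1/2) * (∑ i, S.transpose.mulVec sh i *
        (hess f x).mulVec (S.transpose.mulVec sh) i) := by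
  have h1 : ∑ i, S.mulVec (grad f x) i * sh i = ∑ i, S.transpose.mulVec sh i * grad f x i := by
    change S.mulVec (grad f x) ⬝ᵥ sh = S.transpose.mulVec sh ⬝ᵥ grad f x
    rw [dotProduct_comm, Matrix.dotProduct_mulVec, Matrix.mulVec_transpose]
  have h2 : ∑ i, sh i * (S * hess f x * S.transpose).mulVec sh i = ∑ i, S.transpose.mulVec sh i *
        (hess f x).mulVec (S.transpose.mulVec sh) i := by
    change sh ⬝ᵥ (S * hess f x * S.transpose).mulVec sh =
      S.transpose.mulVec sh ⬝ᵥ (hess f x).mulVec (S.transpose.mulVec sh)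
    rw [← Matrix.mulVec_mulVec, ← Matrix.mulVec_mulVec, Matrix.dotProduct_mulVec,
      ← Matrix.mulVec_transpose]
  rw [qhat, h1, h2]

theorem stmt3 {d l : ℕ} (L_H θ α : ℝ) (hLH : 0 < L_H) (hθ : θ ∈ Set.Ioo (0:ℝ) 1)
    (hα : 0 < α) (hα2 : α ≤ 2 * (1 - θ) / L_H)
    (f : (Fin d → ℝ) → ℝ) (hf : ContDiff ℝ 2 f) (hLip : LipschitzHessian f L_H)
    (x : Fin d → ℝ) (S : Matrix (Fin l) (Fin d) ℝ) (sh : Fin l → ℝ)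
    (hs : S.transpose.mulVec sh ≠ 0)
    (hdecr : f x - qhat f x S sh ≥ (1/(3*α)) * enorm (S.transpose.mulVec sh) ^ 3) :
    f x - f (x + S.transpose.mulVec sh) ≥ θ * (f x - qhat f x S sh) := by
  have ht := taylor L_H f hf hLip x _ hs
  rw [← qhat_eq] at ht
  set D := f x - qhat f x S sh with hD
  set N := enorm (S.transpose.mulVec sh) ^ 3 with hN
  have hN0 : 0 ≤ N := pow_nonneg (enorm_nonneg' _) 3
  have h1 : N ≤ 3 * α * D := by
    have h : 1 / (3 * α) * N ≤ D := hdecr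
    rw [one_div, inv_mul_le_iff₀ (by positivity)] at h
    exact h
  have hD0 : 0 ≤ D := by
    have : 0 ≤ 1 / (3 * α) * N := by positivity
    linarith
  have h2 : α * L_H ≤ 2 * (1 - θ) := (le_div_iff₀ hLH).1 hα2
  have h3 := mul_le_mul_of_nonneg_right h2 hD0
  have h4 := mul_le_mul_of_nonneg_left h1 hLH.le
  nlinarith

end RARC
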